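/- arXiv:1511.08995 — 7 statements merged into one kernel-verified Lean document; each statement's English description precedes it below -/
import Mathlib

section
/- Let c > 0 be a real constant, let L be a fixed real 3×3 matrix, and let A : ℝ → (3×3 real matrices) be differentiable at t with derivative A'(t) = −A(t)·L − c · |det A(t)|^{5/3} · A(t) · dev(A(t)ᵀA(t)). Then the function G(t) = A(t)ᵀ A(t) is differentiable at t with derivative G'(t) = −( G(t)·L + Lᵀ·G(t) ) − 2c · |det A(t)|^{5/3} · G(t) · dev(G(t)). (This is the evolution equation of the metric tensor G = AᵀA implied by the relaxation equation for the distortion tensor A of the HPR model.) -/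
open Matrix

attribute [local instance] Matrix.normedAddCommGroup Matrix.normedSpace

/-- The deviator (trace-free part) of a real 3×3 matrix: `dev M = M - (1/3) tr(M) • I`. -/
noncomputable def dev (M : Matrix (Fin 3) (Fin 3) ℝ) : Matrix (Fin 3) (Fin 3) ℝ :=
  M - (Matrix.trace M / 3) • (1 : Matrix (Fin 3) (Fin 3) ℝ)

/-- If `A : ℝ → Matrix 3 3 ℝ` satisfies at `t` the relaxation ODE
`A' = −A·L − c |det A|^(5/3) A dev(AᵀA)` (with `c > 0` and constant `L`), then
`G = AᵀA` satisfies `G' = −(G·L + Lᵀ·G) − 2c |det A|^(5/3) G dev(G)` at `t`. -/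
theorem metric_tensor_evolution (c : ℝ) (hc : 0 < c)
    (L : Matrix (Fin 3) (Fin 3) ℝ) (A : ℝ → Matrix (Fin 3) (Fin 3) ℝ) (t : ℝ)
    (hA : HasDerivAt A
      (-(A t * L) - (c * |(A t).det| ^ ((5 : ℝ) / 3)) • (A t * dev ((A t)ᵀ * A t))) t) :
    HasDerivAt (fun s => (A s)ᵀ * A s)
      (-(((A t)ᵀ * A t) * L + Lᵀ * ((A t)ᵀ * A t)) -
        (2 * c * |(A t).det| ^ ((5 : ℝ) / 3)) •
          (((A t)ᵀ * A t) * dev ((A t)ᵀ * A t))) t := by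
  have entry : ∀ i j, HasDerivAt (fun s => A s i j)
      ((-(A t * L) - (c * |(A t).det| ^ ((5 : ℝ) / 3)) • (A t * dev ((A t)ᵀ * A t))) i j) t := by
    intro i j
    exact hasDerivAt_pi.1 (hasDerivAt_pi.1 hA i) j
  have key : ∀ D : Matrix (Fin 3) (Fin 3) ℝ, (∀ i j, HasDerivAt (fun s => A s i j) (D i j) t) →
      HasDerivAt (fun s => (A s)ᵀ * A s) (Dᵀ * A t + (A t)ᵀ * D) t := by
    intro D hD
    refine hasDerivAt_pi.2 fun i => hasDerivAt_pi.2 fun j => ?_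
    have h := HasDerivAt.fun_sum (u := Finset.univ)
      (fun k (_ : k ∈ Finset.univ) => (hD k i).mul (hD k j))
    simp only [Matrix.add_apply, Matrix.mul_apply, Matrix.transpose_apply,
      ← Finset.sum_add_distrib]
    exact h
  have h := key _ entry
  convert h using 1
  have hs : (dev ((A t)ᵀ * A t))ᵀ = dev ((A t)ᵀ * A t) := by
    simp [dev, Matrix.transpose_mul]
  have hcomm : dev ((A t)ᵀ * A t) * ((A t)ᵀ * A t) = ((A t)ᵀ * A t) * dev ((A t)ᵀ * A t) := by
    simp [dev, sub_mul, mul_sub]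
  simp only [Matrix.transpose_sub, Matrix.transpose_neg, Matrix.transpose_smul,
    Matrix.transpose_mul, hs, sub_mul, mul_sub, neg_mul, mul_neg, Matrix.smul_mul,
    Matrix.mul_smul]
  rw [Matrix.mul_assoc (dev _), hcomm, Matrix.mul_assoc Lᵀ, ← Matrix.mul_assoc (A t)ᵀ (A t) L,
    ← Matrix.mul_assoc (A t)ᵀ (A t) (dev _)]
  module
end

section
/- Let ρ > 0, c₀, c_s be real numbers and let A be the real 8×8 matrix (acting on the state (ρ, p, v₁, v₂, v₃, A₁₁, A₂₁, A₃₁)) whose only nonzero entries are: A(1,3) = ρ, A(2,3) = ρ c₀², A(3,2) = 1/ρ, A(3,6) = (4/3) c_s², A(4,7) = c_s², A(5,8) = c_s², A(6,3) = 1, A(7,4) = 1, A(8,5) = 1. Then the characteristic polynomial of A equals X² (X² − c_s²)² (X² − (c₀² + (4/3) c_s²)). In particular, if c_s > 0 and c₀ > 0, the nonzero eigenvalues of A are exactly ±c_s (each with multiplicity two) and ±√(c₀² + (4/3) c_s²). -/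
open Matrix Polynomial

lemma det_aux {R : Type*} [CommRing R] (x r b d e f : R) :
    (!![x, 0, -r, 0, 0, 0, 0, 0;
        0, x, -b, 0, 0, 0, 0, 0;
        0, -d, x, 0, 0, -e, 0, 0;
        0, 0, 0, x, 0, 0, -f, 0;
        0, 0, 0, 0, x, 0, 0, -f;
        0, 0, -1, 0, 0, x, 0, 0;
        0, 0, 0, -1, 0, 0, x, 0;
        0, 0, 0, 0, -1, 0, 0, x] : Matrix (Fin 8) (Fin 8) R).det
      = x ^ 2 * (x ^ 2 - f) ^ 2 * (x ^ 2 - (b * d + e)) := by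
  let g : Fin 4 ⊕ Fin 4 → Fin 8 := Sum.elim ![0, 1, 2, 5] ![3, 4, 6, 7]
  have hg : Function.Bijective g := by decide
  rw [← det_submatrix_equiv_self (Equiv.ofBijective g hg)]
  have hb : ∀ M : Matrix (Fin 4 ⊕ Fin 4) (Fin 4 ⊕ Fin 4) R,
      M = fromBlocks !![x, 0, -r, 0; 0, x, -b, 0; 0, -d, x, -e; 0, 0, -1, x] 0 0
        !![x, 0, -f, 0; 0, x, 0, -f; -1, 0, x, 0; 0, -1, 0, x] →
      M.det = x ^ 2 * (x ^ 2 - f) ^ 2 * (x ^ 2 - (b * d + e)) := by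
    rintro M rfl
    rw [det_fromBlocks_zero₂₁]
    simp [Fin.sum_univ_succ, det_succ_row_zero, Fin.succAbove]
    ring
  apply hb
  ext i j
  rcases i with i | i <;> rcases j with j | j <;> fin_cases i <;> fin_cases j <;> rfl

lemma mult_aux (a : ℝ) (p q : ℝ[X]) (h : p = (X - C a) ^ 2 * q) (hq : q.eval a ≠ 0) :
    p.rootMultiplicity a = 2 := by
  have hq0 : q ≠ 0 := by rintro rfl; simp at hq
  have hne : (X - C a) ^ 2 * q ≠ 0 := mul_ne_zero (pow_ne_zero _ (X_sub_C_ne_zero a)) hq0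
  rw [h, rootMultiplicity_mul hne, rootMultiplicity_X_sub_C_pow,
    rootMultiplicity_eq_zero (by simpa [IsRoot] using hq)]

/-- The coefficient matrix of the viscous (non-heat-conducting) subsystem of the HPR model,
linearized at the rest state, has characteristic polynomial
`X² (X² − c_s²)² (X² − (c₀² + (4/3)c_s²))`; in particular, for `c_s > 0`, `c₀ > 0`, its
nonzero eigenvalues are exactly `±c_s` (each with multiplicity two) and
`±√(c₀² + (4/3)c_s²)`. -/
theorem viscous_subsystem_charpoly (ρ c0 cs : ℝ) (hρ : 0 < ρ) :
    let A : Matrix (Fin 8) (Fin 8) ℝ :=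
      !![0, 0, ρ,        0, 0, 0,              0,      0;
         0, 0, ρ * c0^2, 0, 0, 0,              0,      0;
         0, 1/ρ, 0,      0, 0, (4/3) * cs^2,   0,      0;
         0, 0, 0,        0, 0, 0,              cs^2,   0;
         0, 0, 0,        0, 0, 0,              0,      cs^2;
         0, 0, 1,        0, 0, 0,              0,      0;
         0, 0, 0,        1, 0, 0,              0,      0;
         0, 0, 0,        0, 1, 0,              0,      0]
    A.charpoly =
        X ^ 2 * (X ^ 2 - C (cs ^ 2)) ^ 2 * (X ^ 2 - C (c0 ^ 2 + (4/3) * cs ^ 2)) ∧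
      (0 < cs → 0 < c0 →
        (∀ lam : ℝ, lam ≠ 0 →
          (A.charpoly.IsRoot lam ↔
            lam = cs ∨ lam = -cs ∨
              lam = Real.sqrt (c0 ^ 2 + (4/3) * cs ^ 2) ∨
              lam = -Real.sqrt (c0 ^ 2 + (4/3) * cs ^ 2))) ∧
        A.charpoly.rootMultiplicity cs = 2 ∧
        A.charpoly.rootMultiplicity (-cs) = 2) := by
  intro A
  have hA : A.charpoly =
      X ^ 2 * (X ^ 2 - C (cs ^ 2)) ^ 2 * (X ^ 2 - C (c0 ^ 2 + (4/3) * cs ^ 2)) := by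
    have h := det_aux (X : ℝ[X]) (C ρ) (C (ρ * c0 ^ 2)) (C (1 / ρ)) (C ((4/3) * cs ^ 2))
      (C (cs ^ 2))
    have hc : C (ρ * c0 ^ 2) * C (1 / ρ) + C ((4/3) * cs ^ 2)
        = C (c0 ^ 2 + (4/3) * cs ^ 2) := by
      rw [← C_mul, ← C_add]
      congr 1
      field_simp
    rw [hc] at h
    rw [← h, Matrix.charpoly]
    congr 1
    ext1 i j
    fin_cases i <;> fin_cases j <;> simp [A]
  clear_value A
  refine ⟨hA, fun hcs hc0 => ?_⟩
  have hpos : 0 < c0 ^ 2 + (4/3) * cs ^ 2 := by positivity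
  have hsq := Real.sq_sqrt hpos.le
  have hcs2 : C (cs ^ 2) = (C cs : ℝ[X]) ^ 2 := by simp
  refine ⟨fun lam hlam => ?_, ?_, ?_⟩
  · rw [hA]
    generalize Real.sqrt (c0 ^ 2 + (4/3) * cs ^ 2) = s at hsq ⊢
    rw [← hsq, ← or_assoc, ← sq_eq_sq_iff_eq_or_eq_neg, ← sq_eq_sq_iff_eq_or_eq_neg]
    simp only [IsRoot, eval_mul, eval_pow, eval_sub, eval_X, eval_C, mul_eq_zero, sub_eq_zero,
      pow_eq_zero_iff two_ne_zero, hlam, false_or]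
  · refine mult_aux _ _ (X ^ 2 * (X + C cs) ^ 2 * (X ^ 2 - C (c0 ^ 2 + (4/3) * cs ^ 2))) ?_ ?_
    · rw [hA, hcs2]; ring
    · clear hA hcs2
      simp only [eval_mul, eval_pow, eval_sub, eval_add, eval_X, eval_C]
      have h1 : cs ^ 2 - (c0 ^ 2 + 4 / 3 * cs ^ 2) < 0 := by nlinarith [pow_pos hc0 2, pow_pos hcs 2]
      exact mul_ne_zero (by positivity) h1.ne
  · refine mult_aux _ _ (X ^ 2 * (X - C cs) ^ 2 * (X ^ 2 - C (c0 ^ 2 + (4/3) * cs ^ 2))) ?_ ?_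
    · rw [hA, hcs2, C_neg]; ring
    · clear hA hcs2
      simp only [eval_mul, eval_pow, eval_sub, eval_X, eval_C]
      have h1 : (-cs) ^ 2 - (c0 ^ 2 + 4 / 3 * cs ^ 2) < 0 := by
        nlinarith [pow_pos hc0 2, pow_pos hcs 2]
      have h2 : -cs - cs ≠ 0 := by intro h; linarith
      have h3 : -cs ≠ 0 := by intro h; linarith
      exact mul_ne_zero (mul_ne_zero (pow_ne_zero _ h3) (pow_ne_zero _ h2)) h1.ne
end

section
/- Let ρ > 0, β > 0, T, c₀, c_s, c_h be real numbers, and let A be the real 9×9 matrix (acting on the state (ρ, p, J₁, v₁, v₂, v₃, A₁₁, A₂₁, A₃₁)) whose only nonzero entries are: A(1,4) = ρ; A(2,3) = β c_h², A(2,4) = ρ c₀²; A(3,1) = −T/ρ, A(3,2) = 1/β; A(4,2) = 1/ρ, A(4,7) = (4/3) c_s²; A(5,8) = c_s²; A(6,9) = c_s²; A(7,4) = 1; A(8,5) = 1; A(9,6) = 1. Then the characteristic polynomial of A equals X (X² − c_s²)² (X⁴ − C X² + D), where C = c₀² + c_h² + (4/3) c_s² and D = c_h² ((4/3) c_s² +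 β T / ρ). In particular A has eight nonzero eigenvalues: ±c_s (each with multiplicity two, corresponding to shear waves) and the four roots λ of λ⁴ − C λ² + D = 0 (corresponding to heat waves and longitudinal pressure waves). -/
open Matrix Polynomial

set_option maxHeartbeats 4000000 in
theorem hpr_det {R : Type*} [CommRing R] (x r a b d e f g s : R) :
    Matrix.det !![x, 0, 0, r, 0, 0, 0, 0, 0;
         0, x, a, b, 0, 0, 0, 0, 0;
         d, e, x, 0, 0, 0, 0, 0, 0;
         0, f, 0, x, 0, 0, g, 0, 0;
         0, 0, 0, 0, x, 0, 0, s, 0;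
         0, 0, 0, 0, 0, x, 0, 0, s;
         0, 0, 0, -1, 0, 0, x, 0, 0;
         0, 0, 0, 0, -1, 0, 0, x, 0;
         0, 0, 0, 0, 0, -1, 0, 0, x] =
    (x ^ 2 + s) ^ 2 * ((x ^ 2 + g) * (x ^ 3 - a * e * x) - f * a * d * r * x - b * f * x ^ 3) := by
  simp [Matrix.det_succ_row_zero, Fin.sum_univ_succ, Fin.succAbove]
  ring

/-- The coefficient matrix of the full HPR model (viscous and heat-conducting),
linearized at the rest state, has characteristic polynomial
`X (X² − c_s²)² (X⁴ − C X² + D)` with `C = c₀² + c_h² + (4/3)c_s²` and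
`D = c_h²((4/3)c_s² + βT/ρ)`; in particular its nonzero eigenvalues are exactly
`±c_s` (shear waves) and the roots of the quartic `λ⁴ − Cλ² + D = 0`
(heat waves and longitudinal pressure waves). -/
theorem full_system_charpoly (ρ β T c0 cs ch : ℝ) (hρ : 0 < ρ) (hβ : 0 < β) :
    let A : Matrix (Fin 9) (Fin 9) ℝ :=
      !![0,       0,     0,          ρ,        0, 0, 0,            0,    0;
         0,       0,     β * ch^2,   ρ * c0^2, 0, 0, 0,            0,    0;
         -T / ρ,  1/β,   0,          0,        0, 0, 0,            0,    0;
         0,       1/ρ,   0,          0,        0, 0, (4/3) * cs^2, 0,    0;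
         0,       0,     0,          0,        0, 0, 0,            cs^2, 0;
         0,       0,     0,          0,        0, 0, 0,            0,    cs^2;
         0,       0,     0,          1,        0, 0, 0,            0,    0;
         0,       0,     0,          0,        1, 0, 0,            0,    0;
         0,       0,     0,          0,        0, 1, 0,            0,    0]
    let Cc : ℝ := c0 ^ 2 + ch ^ 2 + (4/3) * cs ^ 2
    let D : ℝ := ch ^ 2 * ((4/3) * cs ^ 2 + β * T / ρ)
    A.charpoly = X * (X ^ 2 - C (cs ^ 2)) ^ 2 * (X ^ 4 - C Cc * X ^ 2 + C D) ∧
      ∀ lam : ℝ, lam ≠ 0 →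
        (A.charpoly.IsRoot lam ↔
          lam = cs ∨ lam = -cs ∨ lam ^ 4 - Cc * lam ^ 2 + D = 0) := by
  intro A Cc D
  have hch : A.charpoly = X * (X ^ 2 - C (cs ^ 2)) ^ 2 * (X ^ 4 - C Cc * X ^ 2 + C D) := by
    have hM : A.charmatrix = !![X, 0, 0, -C ρ, 0, 0, 0, 0, 0;
         0, X, -C (β * ch^2), -C (ρ * c0^2), 0, 0, 0, 0, 0;
         -C (-T / ρ), -C (1/β), X, 0, 0, 0, 0, 0, 0;
         0, -C (1/ρ), 0, X, 0, 0, -C ((4/3) * cs^2), 0, 0;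
         0, 0, 0, 0, X, 0, 0, -C (cs^2), 0;
         0, 0, 0, 0, 0, X, 0, 0, -C (cs^2);
         0, 0, 0, -1, 0, 0, X, 0, 0;
         0, 0, 0, 0, -1, 0, 0, X, 0;
         0, 0, 0, 0, 0, -1, 0, 0, X] := by
      ext1 i j
      fin_cases i <;> fin_cases j <;> simp [A, -map_mul, -map_pow]
    rw [Matrix.charpoly, hM, hpr_det]
    have h1 : (C (β * ch^2) * C (1/β) : ℝ[X]) = C (ch^2) := by
      rw [← C_mul]; congr 1; field_simp
    have h2 : (C (ρ * c0^2) * C (1/ρ) : ℝ[X]) = C (c0^2) := by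
      rw [← C_mul]; congr 1; field_simp
    have h3 : (C (1/ρ) * C (β * ch^2) * C (-T / ρ) * C ρ : ℝ[X]) = -C (ch^2 * (β * T / ρ)) := by
      rw [← C_mul, ← C_mul, ← C_mul, ← C_neg]; congr 1; field_simp
    have hC : (C Cc : ℝ[X]) = C (c0^2) + C (ch^2) + C ((4/3) * cs^2) := by
      simp only [Cc, C_add]
    have hD : (C D : ℝ[X]) = C (ch^2) * C ((4/3) * cs^2) + C (ch^2 * (β * T / ρ)) := by
      rw [← C_mul, ← C_add]; congr 1; simp only [D]; ring
    rw [hC, hD]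
    linear_combination (X ^ 2 - C (cs ^ 2)) ^ 2 * (-(X ^ 2 - C ((4/3) * cs^2)) * X * h1
      - X ^ 3 * h2 - X * h3)
  refine ⟨hch, fun lam hl => ?_⟩
  rw [hch]
  have h : (lam ^ 2 - cs ^ 2 = 0) ↔ lam = cs ∨ lam = -cs := by
    rw [sub_eq_zero, sq_eq_sq_iff_eq_or_eq_neg]
  rw [← or_assoc, ← h]
  simp only [IsRoot.def, eval_mul, eval_X, eval_pow, eval_sub, eval_add, eval_C, mul_eq_zero,
    hl, false_or, pow_eq_zero_iff two_ne_zero]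
end

section
/- Let c₀ > 0 and c_s > 0 be real numbers, set c_∞ = √(c₀² + (4/3)c_s²), and for Ω > 0 define X(Ω) = √(Ω² + 16), Y(Ω) = √(Ω² + 16 (c₀/c_∞)⁴), and the longitudinal phase velocity V^long(Ω) = (c_∞/(2 X(Ω))) ( √((X(Ω)−Ω)(Y(Ω)−Ω)) + √((X(Ω)+Ω)(Y(Ω)+Ω)) ). Then V^long(Ω) tends to c₀ as Ω tends to 0 from the right: the low-frequency limit of the longitudinal sound speed of the HPR model is the adiabatic sound speed c₀. -/
open Filter Topology

/-- The low-frequency limit of the longitudinal phase velocity `V^long(Ω)` of the HPR model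
is the adiabatic sound speed `c₀`: `V^long(Ω) → c₀` as `Ω → 0⁺`. -/
theorem longitudinal_phase_velocity_low_freq_limit (c0 cs : ℝ) (hc0 : 0 < c0) (hcs : 0 < cs) :
    Filter.Tendsto
      (fun Ω : ℝ =>
        let cinf := Real.sqrt (c0 ^ 2 + (4/3) * cs ^ 2)
        let X := Real.sqrt (Ω ^ 2 + 16)
        let Y := Real.sqrt (Ω ^ 2 + 16 * (c0 / cinf) ^ 4)
        (cinf / (2 * X)) *
          (Real.sqrt ((X - Ω) * (Y - Ω)) + Real.sqrt ((X + Ω) * (Y + Ω))))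
      (nhdsWithin 0 (Set.Ioi 0)) (nhds c0) := by
  have hpos : 0 < Real.sqrt (c0 ^ 2 + (4/3) * cs ^ 2) := Real.sqrt_pos.mpr (by positivity)
  generalize Real.sqrt (c0 ^ 2 + (4/3) * cs ^ 2) = c at hpos
  have hr : 0 < c0 / c := div_pos hc0 hpos
  have hX : Real.sqrt ((0:ℝ) ^ 2 + 16) = 4 := by
    rw [show ((0:ℝ) ^ 2 + 16) = 4 ^ 2 by norm_num]
    exact Real.sqrt_sq (by norm_num)
  have hY : Real.sqrt ((0:ℝ) ^ 2 + 16 * (c0 / c) ^ 4) = 4 * (c0 / c) ^ 2 := by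
    rw [show ((0:ℝ) ^ 2 + 16 * (c0 / c) ^ 4) = (4 * (c0 / c) ^ 2) ^ 2 by ring]
    exact Real.sqrt_sq (by positivity)
  have hZ : Real.sqrt (4 * (4 * (c0 / c) ^ 2)) = 4 * (c0 / c) := by
    rw [show (4 * (4 * (c0 / c) ^ 2)) = (4 * (c0 / c)) ^ 2 by ring]
    exact Real.sqrt_sq (by positivity)
  have hcont : Continuous (fun Ω : ℝ =>
      (c / (2 * Real.sqrt (Ω ^ 2 + 16))) *
        (Real.sqrt ((Real.sqrt (Ω ^ 2 + 16) - Ω) *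
            (Real.sqrt (Ω ^ 2 + 16 * (c0 / c) ^ 4) - Ω)) +
          Real.sqrt ((Real.sqrt (Ω ^ 2 + 16) + Ω) *
            (Real.sqrt (Ω ^ 2 + 16 * (c0 / c) ^ 4) + Ω)))) := by
    refine Continuous.mul (Continuous.div (by fun_prop) (by fun_prop) ?_) (by fun_prop)
    intro Ω
    positivity
  have h := (hcont.tendsto 0).mono_left (nhdsWithin_le_nhds (s := Set.Ioi (0:ℝ)))
  simp only [hX, hY, sub_zero, add_zero, hZ] at h
  have hval : c / (2 * 4) * (4 * (c0 / c) + 4 * (c0 / c)) = c0 := by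
    field_simp
    ring
  rw [hval] at h
  exact h
end

section
/- Let c₀ > 0 and c_s > 0 be real numbers, set c_∞ = √(c₀² + (4/3)c_s²), and for Ω > 0 define X(Ω) = √(Ω² + 16), Y(Ω) = √(Ω² + 16 (c₀/c_∞)⁴), and the longitudinal phase velocity V^long(Ω) = (c_∞/(2 X(Ω))) ( √((X(Ω)−Ω)(Y(Ω)−Ω)) + √((X(Ω)+Ω)(Y(Ω)+Ω)) ). Then V^long(Ω) tends to c_∞ as Ω tends to +∞: the high-frequency limit of the longitudinal sound speed of the HPR model is the finite characteristic speed c_∞ = √(c₀² + (4/3)c_s²). -/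
open Filter Topology

/-- The high-frequency limit of the longitudinal phase velocity `V^long(Ω)` of the HPR model
is the finite characteristic speed `c_∞ = √(c₀² + (4/3)c_s²)`: `V^long(Ω) → c_∞` as `Ω → ∞`. -/
theorem longitudinal_phase_velocity_high_freq_limit (c0 cs : ℝ) (hc0 : 0 < c0) (hcs : 0 < cs) :
    Filter.Tendsto
      (fun Ω : ℝ =>
        let cinf := Real.sqrt (c0 ^ 2 + (4/3) * cs ^ 2)
        let X := Real.sqrt (Ω ^ 2 + 16)
        let Y := Real.sqrt (Ω ^ 2 + 16 * (c0 / cinf) ^ 4)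
        (cinf / (2 * X)) *
          (Real.sqrt ((X - Ω) * (Y - Ω)) + Real.sqrt ((X + Ω) * (Y + Ω))))
      Filter.atTop (nhds (Real.sqrt (c0 ^ 2 + (4/3) * cs ^ 2))) := by
  set c := Real.sqrt (c0 ^ 2 + (4/3) * cs ^ 2) with hc
  set k : ℝ := 16 * (c0 / c) ^ 4 with hk
  let g : ℝ → ℝ := fun t =>
    (c / (2 * Real.sqrt (1 + 16 * t ^ 2))) *
      (Real.sqrt ((Real.sqrt (1 + 16 * t ^ 2) - 1) * (Real.sqrt (1 + k * t ^ 2) - 1)) +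
        Real.sqrt ((Real.sqrt (1 + 16 * t ^ 2) + 1) * (Real.sqrt (1 + k * t ^ 2) + 1)))
  have hg : Continuous g := by
    have h : ∀ t : ℝ, 2 * Real.sqrt (1 + 16 * t ^ 2) ≠ 0 := fun t => by positivity
    exact (Continuous.div (by fun_prop) (by fun_prop) h).mul (by fun_prop)
  have hg0 : g 0 = c := by
    have h4 : Real.sqrt ((1 + 1) * (1 + 1)) = 2 := by
      rw [Real.sqrt_mul_self (by norm_num)]; norm_num
    simp only [g]
    norm_num at h4 ⊢
  have hlim : Tendsto (fun Ω : ℝ => g Ω⁻¹) atTop (nhds c) := by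
    have h := (hg.tendsto 0).comp (tendsto_inv_atTop_zero (𝕜 := ℝ))
    rw [hg0] at h
    exact h
  refine hlim.congr' ?_
  filter_upwards [eventually_gt_atTop 0] with Ω hΩ
  have key : ∀ m : ℝ, Real.sqrt (Ω ^ 2 + m) = Ω * Real.sqrt (1 + m * Ω⁻¹ ^ 2) := by
    intro m
    have : Ω ^ 2 + m = Ω ^ 2 * (1 + m * Ω⁻¹ ^ 2) := by field_simp
    rw [this, Real.sqrt_mul (by positivity), Real.sqrt_sq hΩ.le]
  have key2 : ∀ m : ℝ, Real.sqrt (Ω ^ 2 * m) = Ω * Real.sqrt m := by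
    intro m
    rw [Real.sqrt_mul (by positivity), Real.sqrt_sq hΩ.le]
  simp only [g]
  rw [key 16, key k]
  have hp : 0 < Real.sqrt (1 + 16 * Ω⁻¹ ^ 2) := by positivity
  generalize Real.sqrt (1 + 16 * Ω⁻¹ ^ 2) = a at *
  generalize Real.sqrt (1 + k * Ω⁻¹ ^ 2) = b at *
  rw [show (Ω * a - Ω) * (Ω * b - Ω) = Ω ^ 2 * ((a - 1) * (b - 1)) by ring,
    show (Ω * a + Ω) * (Ω * b + Ω) = Ω ^ 2 * ((a + 1) * (b + 1)) by ring, key2, key2]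
  field_simp
end

section
/- Let ρ > 0, T > 0, c_V > 0 and α > 0 be real numbers, set c_h = (α/ρ)√(T/c_V), and for Ω > 0 define X(Ω) = √(ρ² + Ω²) and the heat-wave phase velocity V^heat(Ω) = 2 (α √(T Ω) / (ρ √(c_V))) · ( √(X(Ω)+ρ) + √(X(Ω)−ρ) ) / ( √(X(Ω)+ρ) − √(X(Ω)−ρ) + 2 X(Ω) + 2Ω ). Then V^heat(Ω) tends to 0 as Ω tends to 0 from the right, and V^heat(Ω) tends to c_h as Ω tends to +∞: the low- and high-frequency limits of the heat-wave phase velocity of the hyperbolic heat conduction subsystem are 0 and the finite characteristic heat speed c_h, respectively. -/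
open Filter Topology

/-- The low- and high-frequency limits of the heat-wave phase velocity `V^heat(Ω)` of the
hyperbolic heat conduction subsystem of the HPR model are `0` and the finite characteristic
heat speed `c_h = (α/ρ)√(T/c_V)`, respectively. -/
theorem heat_phase_velocity_limits (ρ T cV α : ℝ)
    (hρ : 0 < ρ) (hT : 0 < T) (hcV : 0 < cV) (hα : 0 < α) :
    Filter.Tendsto
        (fun Ω : ℝ =>
          let X := Real.sqrt (ρ ^ 2 + Ω ^ 2)
          2 * (α * Real.sqrt (T * Ω) / (ρ * Real.sqrt cV)) *
            ((Real.sqrt (X + ρ) + Real.sqrt (X - ρ)) /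
              (Real.sqrt (X + ρ) - Real.sqrt (X - ρ) + 2 * X + 2 * Ω)))
        (nhdsWithin 0 (Set.Ioi 0)) (nhds 0) ∧
      Filter.Tendsto
        (fun Ω : ℝ =>
          let X := Real.sqrt (ρ ^ 2 + Ω ^ 2)
          2 * (α * Real.sqrt (T * Ω) / (ρ * Real.sqrt cV)) *
            ((Real.sqrt (X + ρ) + Real.sqrt (X - ρ)) /
              (Real.sqrt (X + ρ) - Real.sqrt (X - ρ) + 2 * X + 2 * Ω)))
        Filter.atTop (nhds ((α / ρ) * Real.sqrt (T / cV))) := by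
  constructor
  · have h : ContinuousAt (fun Ω : ℝ =>
          2 * (α * Real.sqrt (T * Ω) / (ρ * Real.sqrt cV)) *
            ((Real.sqrt (Real.sqrt (ρ ^ 2 + Ω ^ 2) + ρ) + Real.sqrt (Real.sqrt (ρ ^ 2 + Ω ^ 2) - ρ)) /
              (Real.sqrt (Real.sqrt (ρ ^ 2 + Ω ^ 2) + ρ) - Real.sqrt (Real.sqrt (ρ ^ 2 + Ω ^ 2) - ρ)
                + 2 * Real.sqrt (ρ ^ 2 + Ω ^ 2) + 2 * Ω))) 0 := by
      refine ContinuousAt.mul (by fun_prop) (ContinuousAt.div (by fun_prop) (by fun_prop) ?_)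
      have e : Real.sqrt (ρ ^ 2 + 0 ^ 2) = ρ := by
        rw [show ρ ^ 2 + (0:ℝ) ^ 2 = ρ ^ 2 by ring, Real.sqrt_sq hρ.le]
      rw [e, sub_self, Real.sqrt_zero, sub_zero]
      positivity
    have h2 := h.tendsto
    simp only [mul_zero, Real.sqrt_zero, zero_div, zero_mul] at h2
    exact h2.mono_left nhdsWithin_le_nhds
  · have h : ContinuousAt (fun t : ℝ =>
          2 * (α * Real.sqrt T / (ρ * Real.sqrt cV)) *
            ((Real.sqrt (Real.sqrt (ρ ^ 2 * t ^ 2 + 1) + ρ * t)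
                + Real.sqrt (Real.sqrt (ρ ^ 2 * t ^ 2 + 1) - ρ * t)) /
              (Real.sqrt t * (Real.sqrt (Real.sqrt (ρ ^ 2 * t ^ 2 + 1) + ρ * t)
                - Real.sqrt (Real.sqrt (ρ ^ 2 * t ^ 2 + 1) - ρ * t))
                + 2 * Real.sqrt (ρ ^ 2 * t ^ 2 + 1) + 2))) 0 := by
      refine ContinuousAt.mul (by fun_prop) (ContinuousAt.div (by fun_prop) (by fun_prop) ?_)
      norm_num
    have h2 := h.tendsto.comp tendsto_inv_atTop_zero
    have e : (α / ρ) * Real.sqrt (T / cV) = 2 * (α * Real.sqrt T / (ρ * Real.sqrt cV)) *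
            ((Real.sqrt (Real.sqrt (ρ ^ 2 * 0 ^ 2 + 1) + ρ * 0)
                + Real.sqrt (Real.sqrt (ρ ^ 2 * 0 ^ 2 + 1) - ρ * 0)) /
              (Real.sqrt 0 * (Real.sqrt (Real.sqrt (ρ ^ 2 * 0 ^ 2 + 1) + ρ * 0)
                - Real.sqrt (Real.sqrt (ρ ^ 2 * 0 ^ 2 + 1) - ρ * 0))
                + 2 * Real.sqrt (ρ ^ 2 * 0 ^ 2 + 1) + 2)) := by
      rw [Real.sqrt_div hT.le]
      norm_num
      ring
    rw [e]
    refine h2.congr' ?_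
    filter_upwards [eventually_gt_atTop 0] with Ω hΩ
    obtain ⟨s, hs, rfl⟩ : ∃ s : ℝ, 0 < s ∧ Ω = s ^ 2 :=
      ⟨Real.sqrt Ω, Real.sqrt_pos.2 hΩ, (Real.sq_sqrt hΩ.le).symm⟩
    simp only [Function.comp]
    have hX : Real.sqrt (ρ ^ 2 + (s ^ 2) ^ 2)
        = s ^ 2 * Real.sqrt (ρ ^ 2 * (s ^ 2)⁻¹ ^ 2 + 1) := by
      rw [show ρ ^ 2 + (s ^ 2) ^ 2 = (s ^ 2) ^ 2 * (ρ ^ 2 * (s ^ 2)⁻¹ ^ 2 + 1) by field_simp,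
        Real.sqrt_mul (by positivity), Real.sqrt_sq (by positivity)]
    rw [hX]
    generalize hY : Real.sqrt (ρ ^ 2 * (s ^ 2)⁻¹ ^ 2 + 1) = Y
    have hY0 : 0 ≤ Y := hY ▸ Real.sqrt_nonneg _
    have hA : Real.sqrt (s ^ 2 * Y + ρ) = s * Real.sqrt (Y + ρ * (s ^ 2)⁻¹) := by
      rw [show s ^ 2 * Y + ρ = s ^ 2 * (Y + ρ * (s ^ 2)⁻¹) by field_simp,
        Real.sqrt_mul (by positivity), Real.sqrt_sq hs.le]
    have hB : Real.sqrt (s ^ 2 * Y - ρ) = s * Real.sqrt (Y - ρ * (s ^ 2)⁻¹) := by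
      rw [show s ^ 2 * Y - ρ = s ^ 2 * (Y - ρ * (s ^ 2)⁻¹) by field_simp,
        Real.sqrt_mul (by positivity), Real.sqrt_sq hs.le]
    rw [hA, hB, Real.sqrt_mul hT.le, Real.sqrt_inv, Real.sqrt_sq hs.le]
    generalize Real.sqrt (Y + ρ * (s ^ 2)⁻¹) = A
    generalize Real.sqrt (Y - ρ * (s ^ 2)⁻¹) = B
    rw [show s * A - s * B + 2 * (s ^ 2 * Y) + 2 * s ^ 2
      = s ^ 2 * (s⁻¹ * (A - B) + 2 * Y + 2) by field_simp]
    generalize s⁻¹ * (A - B) + 2 * Y + 2 = D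
    rw [div_eq_mul_inv _ (s ^ 2 * D), mul_inv, div_eq_mul_inv _ D]
    field_simp
end

section
/- Let ρ₀ > 0, c_s and g > 0 be real numbers and let G₁ be a real 3×3 matrix. Define, for real τ in a neighbourhood of 0 where det(g·I + τ·G₁) > 0, the matrix-valued function σ(τ) = −ρ₀ c_s² √(det(g·I + τ·G₁)) · (g·I + τ·G₁) · dev(g·I + τ·G₁). Then σ(0) = 0 and σ is differentiable at τ = 0 with derivative σ'(0) = −ρ₀ c_s² g^{5/2} dev(G₁). (This is the first-order Chapman–Enskog expansion of the HPR viscous stress tensor σ = −ρ c_s² G dev(G) with ρ = ρ₀ √(det G), G = gI + τG₁, which yields Newton's law of viscosity in the stiff relaxation limit.) -/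
open Matrix

attribute [local instance] Matrix.normedAddCommGroup Matrix.normedSpace

/-- First-order Chapman–Enskog expansion of the HPR viscous stress tensor: for
`σ(τ) = −ρ₀ c_s² √(det(gI + τG₁)) (gI + τG₁) dev(gI + τG₁)`, one has `σ(0) = 0` and
`σ'(0) = −ρ₀ c_s² g^(5/2) dev(G₁)`. -/
theorem stress_chapman_enskog (ρ₀ cs g : ℝ) (hρ₀ : 0 < ρ₀) (hg : 0 < g)
    (G₁ : Matrix (Fin 3) (Fin 3) ℝ) :
    let σ : ℝ → Matrix (Fin 3) (Fin 3) ℝ := fun τ =>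
      (-(ρ₀ * cs ^ 2) *
          Real.sqrt ((g • (1 : Matrix (Fin 3) (Fin 3) ℝ) + τ • G₁).det)) •
        ((g • (1 : Matrix (Fin 3) (Fin 3) ℝ) + τ • G₁) *
          dev (g • (1 : Matrix (Fin 3) (Fin 3) ℝ) + τ • G₁))
    σ 0 = 0 ∧
      HasDerivAt σ ((-(ρ₀ * cs ^ 2) * g ^ ((5 : ℝ) / 2)) • dev G₁) 0 := by
  intro σ
  have hdev : ∀ τ : ℝ, dev (g • (1 : Matrix (Fin 3) (Fin 3) ℝ) + τ • G₁) = τ • dev G₁ := by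
    intro τ
    ext i j
    simp only [dev, Matrix.trace_add, Matrix.trace_smul, Matrix.trace_one, Fintype.card_fin,
      Matrix.sub_apply, Matrix.add_apply, Matrix.smul_apply, smul_eq_mul]
    push_cast
    ring
  let F : ℝ → Matrix (Fin 3) (Fin 3) ℝ := fun τ =>
    (-(ρ₀ * cs ^ 2) * Real.sqrt ((g • (1 : Matrix (Fin 3) (Fin 3) ℝ) + τ • G₁).det)) •
      ((g • (1 : Matrix (Fin 3) (Fin 3) ℝ) + τ • G₁) * dev G₁)
  have hσ : ∀ τ, σ τ = τ • F τ := by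
    intro τ
    simp only [σ, F, hdev, Matrix.mul_smul]
    rw [smul_comm]
  have h0 : σ 0 = 0 := by rw [hσ, zero_smul]
  have hF : Continuous F := by
    have hG : Continuous fun τ : ℝ => g • (1 : Matrix (Fin 3) (Fin 3) ℝ) + τ • G₁ := by
      fun_prop
    exact (continuous_const.mul (Real.continuous_sqrt.comp hG.matrix_det)).smul
      (hG.matrix_mul continuous_const)
  have hF0 : F 0 = (-(ρ₀ * cs ^ 2) * g ^ ((5 : ℝ) / 2)) • dev G₁ := by
    have hs : Real.sqrt (g ^ 3) * g = g ^ ((5 : ℝ) / 2) := by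
      rw [Real.sqrt_eq_rpow, ← Real.rpow_natCast, ← Real.rpow_mul hg.le]
      nth_rewrite 2 [← Real.rpow_one g]
      rw [← Real.rpow_add hg]
      norm_num
    simp only [F, zero_smul, add_zero, Matrix.det_smul, Matrix.det_one, Fintype.card_fin, mul_one,
      Matrix.smul_mul, Matrix.one_mul, smul_smul]
    rw [mul_assoc, hs]
  refine ⟨h0, ?_⟩
  rw [← hF0]
  refine hasDerivAt_iff_tendsto_slope.mpr ?_
  refine (hF.continuousAt.tendsto.mono_left nhdsWithin_le_nhds).congr' ?_
  filter_upwards [self_mem_nhdsWithin] with τ hτ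
  have hτ' : τ ≠ 0 := hτ
  rw [slope_def_module, h0, sub_zero, sub_zero, hσ, smul_smul, inv_mul_cancel₀ hτ', one_smul]
end
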